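/- Let K be a finite nonempty type, p : K → ℝ a probability vector (p x ≥ 0, Σ p x = 1), and for each x ∈ K let σ_x and τ_x be positive definite states in M_n(ℂ). Set σ̄ := Σ_x p x • σ_x and τ̄ := Σ_x p x • τ_x, and assume σ̄ and τ̄ are positive definite. If for every x one has Re(tr((σ_x − τ_x) * log τ_x)) = Re(tr((σ_x − τ_x) * log τ̄)), then (H(σ̄) − Σ_x p x · H(σ_x)) − (H(τ̄) − Σ_x p x · H(τ_x)) ≤ Σ_x p x · D(σ_x‖τ_x). -/

import Mathlib

open scoped ComplexOrder

/-- The matrix logarithm of a (positive definite) matrix, via the continuous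
functional calculus. -/
noncomputable def matLog {n : Type*} [Fintype n] [DecidableEq n]
    (ρ : Matrix n n ℂ) : Matrix n n ℂ :=
  cfc Real.log ρ

/-- The von Neumann entropy of a (positive semidefinite) matrix. -/
noncomputable def vNEntropy {n : Type*} [Fintype n] [DecidableEq n]
    (ρ : Matrix n n ℂ) : ℝ :=
  (Matrix.trace (cfc Real.negMulLog ρ)).re

/-- The quantum relative entropy of (positive definite) matrices. -/
noncomputable def relEntropy {n : Type*} [Fintype n] [DecidableEq n]
    (ρ σ : Matrix n n ℂ) : ℝ :=
  (Matrix.trace (ρ * (matLog ρ - matLog σ))).re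

theorem trace_cfc_mul_cfc {n : Type*} [Fintype n] [DecidableEq n]
    {A B : Matrix n n ℂ} (hA : A.IsHermitian) (hB : B.IsHermitian) :
    ∃ w : n → n → ℝ, (∀ i j, 0 ≤ w i j) ∧ ∀ f g : ℝ → ℝ,
      (Matrix.trace (cfc f A * cfc g B)).re =
        ∑ i, ∑ j, f (hA.eigenvalues i) * g (hB.eigenvalues j) * w i j := by
  let U : Matrix n n ℂ := hA.eigenvectorUnitary
  let V : Matrix n n ℂ := hB.eigenvectorUnitary
  refine ⟨fun i j => Complex.normSq ((star U * V) i j), fun i j => Complex.normSq_nonneg _, ?_⟩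
  intro f g
  have h1 : cfc f A = U * Matrix.diagonal (fun i => (f (hA.eigenvalues i) : ℂ)) * star U := by
    rw [hA.cfc_eq]; rfl
  have h2 : cfc g B = V * Matrix.diagonal (fun i => (g (hB.eigenvalues i) : ℂ)) * star V := by
    rw [hB.cfc_eq]; rfl
  have h3 : Matrix.trace (cfc f A * cfc g B) = Matrix.trace
      (Matrix.diagonal (fun i => (f (hA.eigenvalues i) : ℂ)) * (star U * V) *
        (Matrix.diagonal (fun i => (g (hB.eigenvalues i) : ℂ)) * star (star U * V))) := by
    rw [h1, h2, Matrix.mul_assoc U, Matrix.mul_assoc U, Matrix.trace_mul_comm U]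
    simp only [star_mul, star_star, Matrix.mul_assoc]
  rw [h3]
  generalize star U * V = W
  simp only [Matrix.trace, Matrix.diag, Matrix.mul_apply (M := _ * W), Matrix.diagonal_mul,
    Complex.re_sum, Matrix.star_apply]
  refine Finset.sum_congr rfl fun i _ => Finset.sum_congr rfl fun j _ => ?_
  simp [Complex.normSq_apply]
  ring

theorem cfc_negMulLog_eq {n : Type*} [Fintype n] [DecidableEq n]
    {A : Matrix n n ℂ} (hA : A.PosDef) :
    vNEntropy A = - (Matrix.trace (A * matLog A)).re := by
  have h : cfc Real.negMulLog A = - (A * matLog A) := by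
    have hs : IsSelfAdjoint A := hA.1
    have hc : ∀ f : ℝ → ℝ, ContinuousOn f (spectrum ℝ A) := fun f =>
      (Matrix.finite_real_spectrum).continuousOn f
    have hm := cfc_mul (fun x : ℝ => x) Real.log A (hc _) (hc _)
    rw [cfc_id' ℝ A] at hm
    rw [matLog, ← hm, ← cfc_neg]
    congr 1
    funext x
    simp [Real.negMulLog]
  rw [vNEntropy, h, Matrix.trace_neg, Complex.neg_re]

theorem relEntropy_nonneg_of_trace {n : Type*} [Fintype n] [DecidableEq n]
    {A B : Matrix n n ℂ} (hA : A.PosDef) (hB : B.PosDef) (h : A.trace = B.trace) :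
    0 ≤ relEntropy A B := by
  obtain ⟨w, hw, H⟩ := trace_cfc_mul_cfc hA.1 hB.1
  have hsA : IsSelfAdjoint A := hA.1
  have hsB : IsSelfAdjoint B := hB.1
  have e1 := H Real.negMulLog (fun _ => 1)
  have e2 := H (fun x => x) Real.log
  have e3 := H (fun x => x) (fun _ => 1)
  have e4 := H (fun _ => 1) (fun x => x)
  rw [cfc_const_one ℝ B, mul_one] at e1
  rw [cfc_id' ℝ A] at e2
  rw [cfc_id' ℝ A, cfc_const_one ℝ B, mul_one] at e3
  rw [cfc_id' ℝ B, cfc_const_one ℝ A, one_mul] at e4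
  have e5 := cfc_negMulLog_eq hA
  unfold vNEntropy at e5
  have key : 0 ≤ ∑ i, ∑ j, (-(Real.negMulLog (hA.1.eigenvalues i) * 1 * w i j)
      - hA.1.eigenvalues i * Real.log (hB.1.eigenvalues j) * w i j
      - hA.1.eigenvalues i * 1 * w i j + 1 * hB.1.eigenvalues j * w i j) := by
    refine Finset.sum_nonneg fun i _ => Finset.sum_nonneg fun j _ => ?_
    have ha := hA.eigenvalues_pos i
    have hb := hB.eigenvalues_pos j
    set a := hA.1.eigenvalues i
    set b := hB.1.eigenvalues j
    have hl := Real.log_le_sub_one_of_pos (div_pos hb ha)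
    rw [Real.log_div hb.ne' ha.ne'] at hl
    have h2 := mul_le_mul_of_nonneg_left hl ha.le
    have h3 : a * (b / a - 1) = b - a := by field_simp
    have : 0 ≤ (a * Real.log a - a * Real.log b - a + b) * w i j :=
      mul_nonneg (by linarith) (hw i j)
    unfold Real.negMulLog
    linarith
  simp only [Finset.sum_add_distrib, Finset.sum_sub_distrib, Finset.sum_neg_distrib] at key
  rw [← e1, ← e2, ← e3, ← e4, e5, h] at key
  rw [relEntropy, Matrix.mul_sub, Matrix.trace_sub, Complex.sub_re]
  unfold matLog at *
  linarith

/-- If for every `x` the trace term `Re tr((σ_x − τ_x) log τ_x)` is unchanged when `log τ_x`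
is replaced by `log τ̄`, then the difference of Holevo-type entropy gaps is bounded by the
average relative entropy. -/
theorem holevo_gap_le_avg_relEntropy
    {K : Type*} [Fintype K] [Nonempty K] {n : Type*} [Fintype n] [DecidableEq n]
    (p : K → ℝ) (hp0 : ∀ x, 0 ≤ p x) (hp1 : ∑ x, p x = 1)
    (σ τ : K → Matrix n n ℂ)
    (hσpos : ∀ x, (σ x).PosDef) (hσtr : ∀ x, (σ x).trace = 1)
    (hτpos : ∀ x, (τ x).PosDef) (hτtr : ∀ x, (τ x).trace = 1)
    (hσbar : (∑ x, p x • σ x).PosDef) (hτbar : (∑ x, p x • τ x).PosDef)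
    (htrace : ∀ x,
      (Matrix.trace ((σ x - τ x) * matLog (τ x))).re =
      (Matrix.trace ((σ x - τ x) * matLog (∑ y, p y • τ y))).re) :
    (vNEntropy (∑ x, p x • σ x) - ∑ x, p x * vNEntropy (σ x))
      - (vNEntropy (∑ x, p x • τ x) - ∑ x, p x * vNEntropy (τ x))
      ≤ ∑ x, p x * relEntropy (σ x) (τ x) := by
  have lin : ∀ (ρ : K → Matrix n n ℂ) (L : Matrix n n ℂ),
      (Matrix.trace ((∑ x, p x • ρ x) * L)).re = ∑ x, p x * (Matrix.trace (ρ x * L)).re := by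
    intro ρ L
    simp [Finset.sum_mul, Matrix.trace_sum, Matrix.trace_smul]
  have htr : ∀ ρ : K → Matrix n n ℂ, (∀ x, (ρ x).trace = 1) →
      (∑ x, p x • ρ x).trace = 1 := by
    intro ρ hρ
    simp only [Matrix.trace_sum, Matrix.trace_smul, hρ]
    rw [← Finset.sum_smul, hp1, one_smul]
  have hK := relEntropy_nonneg_of_trace hσbar hτbar ((htr σ hσtr).trans (htr τ hτtr).symm)
  rw [cfc_negMulLog_eq hσbar, cfc_negMulLog_eq hτbar]
  rw [relEntropy, Matrix.mul_sub, Matrix.trace_sub, Complex.sub_re,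
    lin σ (matLog (∑ x, p x • τ x))] at hK
  rw [lin τ (matLog (∑ x, p x • τ x))]
  have hsum : ∑ x, p x * relEntropy (σ x) (τ x) = - ∑ x, p x * vNEntropy (σ x)
      + ∑ x, p x * vNEntropy (τ x)
      - ∑ x, p x * (Matrix.trace (σ x * matLog (∑ y, p y • τ y))).re
      + ∑ x, p x * (Matrix.trace (τ x * matLog (∑ y, p y • τ y))).re := by
    rw [← Finset.sum_neg_distrib, ← Finset.sum_add_distrib, ← Finset.sum_sub_distrib,
      ← Finset.sum_add_distrib]
    refine Finset.sum_congr rfl fun x _ => ?_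
    have hx := htrace x
    simp only [Matrix.sub_mul, Matrix.trace_sub, Complex.sub_re] at hx
    rw [cfc_negMulLog_eq (hσpos x), cfc_negMulLog_eq (hτpos x), relEntropy, Matrix.mul_sub,
      Matrix.trace_sub, Complex.sub_re]
    linear_combination (-p x) * hx
  rw [hsum]
  linarith
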